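/- In the setting of the integral-kernel support proposition, assume moreover that one can take 𝒞 = 𝒟 = 𝓜 (the derivatives exist as integral operators in every direction of 𝓜 − η*) and that the partial minimization function m(x) = inf_{y ∈ [0,x]} ( r*·p(x,y) + λ* · g(x,y) ) is measurable. Then η*( { (x,y) ∈ 𝒜 : y ∈ argmin_{t ∈ [0,x]} ( r*·p(x,t) + λ* · g(x,t) ) } ) = 1; i.e. the optimal treaty is concentrated on the pointwise minimizers of the Lagrangian kernel. -/

import Mathlib

open MeasureTheory Filter Topology Set

noncomputable section

abbrev Vec (n : ℕ) : Type := Fin n → ℝ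
abbrev Pt (n : ℕ) : Type := Vec n × Vec n

def treatySet (n : ℕ) : Set (Pt n) := {p | ∀ i, 0 ≤ p.2 i ∧ p.2 i ≤ p.1 i}

def IsTreaty (n : ℕ) (μ : Measure (Vec n)) (η : Measure (Pt n)) : Prop :=
  IsProbabilityMeasure η ∧ η.map Prod.fst = μ ∧ η (treatySet n) = 1

def combo {α : Type*} [MeasurableSpace α] (η ϑ : Measure α) (t : ℝ) : Measure α :=
  ENNReal.ofReal (1 - t) • η + ENNReal.ofReal t • ϑ

def HasDirDeriv {α : Type*} [MeasurableSpace α] (P : Measure α → ℝ)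
    (η ϑ : Measure α) (L : ℝ) : Prop :=
  Tendsto (fun t : ℝ => (P (combo η ϑ t) - P η) / t) (𝓝[>] 0) (𝓝 L)

/-! Let `f` be the Lagrangian kernel; the multiplier inequality says that `η*` minimizes `∫ f dη`
over all treaties. Every box `[0, x]` is the image of the unit cube under `s ↦ s * x`, so each
`s` in the cube gives a measurable selection `x ↦ s * x` of the set-valued map `x ↦ [0, x]`.
Moving the mass of `η*` from `(x, y)` to `(x, s * x)` wherever this lowers `f` produces another
treaty, so such points are `η*`-null. Doing this for a countable dense set of `s` and using the
continuity of `f` in its second argument yields a single null set off which `y` beats every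
competitor in `[0, x]`. -/

lemma image_mul_right_Icc_zero_one {ι k : Type*} [Semifield k] [LinearOrder k]
    [IsStrictOrderedRing k] {x : ι → k} (hx : 0 ≤ x) :
    (fun s => s * x) '' Icc 0 1 = Icc 0 x := by
  refine Subset.antisymm ?_ fun t ht => ⟨t / x, ⟨?_, ?_⟩, ?_⟩
  · rintro _ ⟨s, hs, rfl⟩
    exact ⟨fun i => mul_nonneg (hs.1 i) (hx i), fun i => mul_le_of_le_one_left (hx i) (hs.2 i)⟩
  · exact fun i => div_nonneg (ht.1 i) (hx i)
  · exact fun i => div_le_one_of_le₀ (ht.2 i) (hx i)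
  · exact funext fun i =>
      div_mul_cancel_of_imp fun hxi => le_antisymm ((ht.2 i).trans_eq hxi) (ht.1 i)

section AlmostEverywhere

variable {α : Type*} [MeasurableSpace α] {μ : Measure α}

lemma ae_forall_of_forall_ae_of_isClosed {S : Type*} [TopologicalSpace S]
    [TopologicalSpace.SeparableSpace S] {R : α → S → Prop}
    (hclosed : ∀ᵐ a ∂μ, IsClosed {s | R a s}) (h : ∀ s, ∀ᵐ a ∂μ, R a s) :
    ∀ᵐ a ∂μ, ∀ s, R a s := by
  obtain ⟨D, hDc, hD⟩ := TopologicalSpace.exists_countable_dense S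
  filter_upwards [hclosed, (ae_ball_iff hDc).2 fun s _ => h s] with a hRa hDa s
  exact hRa.closure_subset_iff.2 hDa (hD s)

lemma ae_le_of_integral_le_integral_min {f g : α → ℝ} (hf : Integrable f μ)
    (hfg : Integrable (fun a => min (f a) (g a)) μ)
    (h : ∫ a, f a ∂μ ≤ ∫ a, min (f a) (g a) ∂μ) : f ≤ᵐ[μ] g := by
  have hmin_le : (fun a => min (f a) (g a)) ≤ᵐ[μ] f := ae_of_all _ fun _ => min_le_left _ _
  have hmin_eq : (fun a => min (f a) (g a)) =ᵐ[μ] f :=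
    (integral_eq_iff_of_ae_le hfg hf hmin_le).1
      (le_antisymm (integral_mono_ae hfg hf hmin_le) h)
  filter_upwards [hmin_eq] with a ha using min_eq_left_iff.1 ha

end AlmostEverywhere

section LagrangianKernel

variable {α ι : Type*} [Fintype ι] {p : α → ℝ} {g : α → ι → ℝ}

/-- The kernel `r * p + λ · g` of the Lagrangian, with multipliers `r` for the objective and `l = λ`
for the constraints. -/
def lagrangianKernel (r : ℝ) (l : ι → ℝ) (p : α → ℝ) (g : α → ι → ℝ) (z : α) : ℝ :=
  r * p z + ∑ i, l i * g z i

lemma measurable_lagrangianKernel [MeasurableSpace α] (r : ℝ) (l : ι → ℝ) (hp : Measurable p)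
    (hg : ∀ i, Measurable fun z => g z i) : Measurable (lagrangianKernel r l p g) :=
  (hp.const_mul r).add (Finset.measurable_fun_sum _ fun i _ => (hg i).const_mul (l i))

lemma continuousOn_lagrangianKernel [TopologicalSpace α] {s : Set α} (r : ℝ) (l : ι → ℝ)
    (hp : ContinuousOn p s) (hg : ∀ i, ContinuousOn (fun z => g z i) s) :
    ContinuousOn (lagrangianKernel r l p g) s :=
  (hp.const_mul r).add (continuousOn_finsetSum _ fun i _ => (hg i).const_mul (l i))

variable [MeasurableSpace α] {η : Measure α}

lemma integrable_lagrangianKernel (r : ℝ) (l : ι → ℝ) (hp : Integrable p η)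
    (hg : ∀ i, Integrable (fun z => g z i) η) : Integrable (lagrangianKernel r l p g) η :=
  (hp.const_mul r).add (integrable_finsetSum _ fun i _ => (hg i).const_mul (l i))

lemma integral_lagrangianKernel (r : ℝ) (l : ι → ℝ) (hp : Integrable p η)
    (hg : ∀ i, Integrable (fun z => g z i) η) :
    ∫ z, lagrangianKernel r l p g z ∂η = r * ∫ z, p z ∂η + ∑ i, l i * ∫ z, g z i ∂η := by
  have hlg : ∀ i ∈ Finset.univ, Integrable (fun z => l i * g z i) η :=
    fun i _ => (hg i).const_mul (l i)
  simp only [lagrangianKernel]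
  rw [integral_add (hp.const_mul r) (integrable_finsetSum _ hlg), integral_finsetSum _ hlg]
  simp only [integral_const_mul]

end LagrangianKernel

lemma mem_treatySet_iff {n : ℕ} {q : Pt n} : q ∈ treatySet n ↔ q.2 ∈ Icc 0 q.1 :=
  forall_and

lemma measurableSet_treatySet (n : ℕ) : MeasurableSet (treatySet n) := by
  have heq : treatySet n = {q | 0 ≤ q.2} ∩ {q | q.2 ≤ q.1} := ext fun _ => mem_treatySet_iff
  rw [heq]
  exact ((isClosed_le continuous_const continuous_snd).inter
    (isClosed_le continuous_snd continuous_fst)).measurableSet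

namespace IsTreaty

variable {n : ℕ} {μ : Measure (Vec n)} {η : Measure (Pt n)}

lemma ae_mem_treatySet (hη : IsTreaty n μ η) : ∀ᵐ q ∂η, q ∈ treatySet n := by
  have := hη.1
  exact (mem_ae_iff_prob_eq_one (measurableSet_treatySet n)).2 hη.2.2

lemma map {φ : Pt n → Pt n} (hη : IsTreaty n μ η) (hφ : Measurable φ)
    (hfst : ∀ q, (φ q).1 = q.1) (hmaps : MapsTo φ (treatySet n) (treatySet n)) :
    IsTreaty n μ (η.map φ) := by
  have := hη.1
  have hprob : IsProbabilityMeasure (η.map φ) :=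
    Measure.isProbabilityMeasure_map hφ.aemeasurable
  refine ⟨hprob, ?_, ?_⟩
  · rw [Measure.map_map measurable_fst hφ, show Prod.fst ∘ φ = Prod.fst from funext hfst]
    exact hη.2.1
  · refine (mem_ae_iff_prob_eq_one (measurableSet_treatySet n)).1 ?_
    exact (ae_map_iff hφ.aemeasurable (measurableSet_treatySet n)).2
      (hη.ae_mem_treatySet.mono hmaps)

variable {f : Pt n → ℝ}

lemma ae_le_comp_of_integral_le (hη : IsTreaty n μ η) (hf : Measurable f)
    (hint : ∀ ϑ, IsTreaty n μ ϑ → Integrable f ϑ)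
    (hmin : ∀ ϑ, IsTreaty n μ ϑ → ∫ z, f z ∂η ≤ ∫ z, f z ∂ϑ)
    {T : Pt n → Pt n} (hT : Measurable T) (hfst : ∀ q, (T q).1 = q.1)
    (hmaps : MapsTo T (treatySet n) (treatySet n)) : ∀ᵐ q ∂η, f q ≤ f (T q) := by
  classical
  let φ : Pt n → Pt n := fun q => if f q ≤ f (T q) then q else T q
  have hφ : Measurable φ := .ite (measurableSet_le hf (hf.comp hT)) measurable_id hT
  have hfφ : f ∘ φ = fun q => min (f q) (f (T q)) :=
    funext fun q => (apply_ite f _ _ _).trans (min_def _ _).symm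
  have hφη : IsTreaty n μ (η.map φ) := by
    refine hη.map hφ (fun q => ?_) fun q hq => ?_ <;> dsimp only [φ] <;> split_ifs
    exacts [rfl, hfst q, hq, hmaps hq]
  refine ae_le_of_integral_le_integral_min (hint η hη) ?_ ?_
  · rw [← hfφ]
    exact (hint _ hφη).comp_measurable hφ
  · calc ∫ q, f q ∂η ≤ ∫ z, f z ∂(η.map φ) := hmin _ hφη
      _ = ∫ q, (f ∘ φ) q ∂η := integral_map hφ.aemeasurable hf.aestronglyMeasurable
      _ = ∫ q, min (f q) (f (T q)) ∂η := by rw [hfφ]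

lemma ae_le_mul_of_integral_le (hη : IsTreaty n μ η) (hf : Measurable f)
    (hint : ∀ ϑ, IsTreaty n μ ϑ → Integrable f ϑ)
    (hmin : ∀ ϑ, IsTreaty n μ ϑ → ∫ z, f z ∂η ≤ ∫ z, f z ∂ϑ)
    {s : Vec n} (hs : s ∈ Icc 0 1) : ∀ᵐ q ∂η, f q ≤ f (q.1, s * q.1) := by
  refine hη.ae_le_comp_of_integral_le hf hint hmin (T := fun q => (q.1, s * q.1))
    (by fun_prop) (fun _ => rfl) fun q hq => ?_
  have hq' : q.2 ∈ Icc 0 q.1 := mem_treatySet_iff.1 hq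
  rw [mem_treatySet_iff, ← image_mul_right_Icc_zero_one (hq'.1.trans hq'.2)]
  exact mem_image_of_mem _ hs

lemma ae_isMinOn_of_integral_le (hη : IsTreaty n μ η) (hf : Measurable f)
    (hcont : ∀ x, ContinuousOn (fun y => f (x, y)) (Icc 0 x))
    (hint : ∀ ϑ, IsTreaty n μ ϑ → Integrable f ϑ)
    (hmin : ∀ ϑ, IsTreaty n μ ϑ → ∫ z, f z ∂η ≤ ∫ z, f z ∂ϑ) :
    ∀ᵐ q ∂η, IsMinOn (fun y => f (q.1, y)) (Icc 0 q.1) q.2 := by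
  have himage : ∀ᵐ q ∂η, (fun s => s * q.1) '' Icc 0 1 = Icc 0 q.1 := by
    filter_upwards [hη.ae_mem_treatySet] with q hq
    have hq' : q.2 ∈ Icc 0 q.1 := mem_treatySet_iff.1 hq
    exact image_mul_right_Icc_zero_one (hq'.1.trans hq'.2)
  have hle : ∀ᵐ q ∂η, ∀ s : Icc (0 : Vec n) 1, f q ≤ f (q.1, s.1 * q.1) := by
    refine ae_forall_of_forall_ae_of_isClosed ?_ fun s =>
      hη.ae_le_mul_of_integral_le hf hint hmin s.2
    filter_upwards [himage] with q hq
    exact isClosed_le continuous_const <| (hcont q.1).comp_continuous (by fun_prop)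
      fun s => hq ▸ mem_image_of_mem _ s.2
  filter_upwards [himage, hle] with q hq hqle
  rw [← hq]
  rintro _ ⟨s, hs, rfl⟩
  exact hqle ⟨s, hs⟩

end IsTreaty

theorem stmt6_general {n : ℕ} {ι : Type*} [Fintype ι] {μ : Measure (Vec n)}
    {ηs : Measure (Pt n)} (hηs : IsTreaty n μ ηs) {p : Pt n → ℝ} {g : Pt n → ι → ℝ}
    (hpmeas : Measurable p) (hgmeas : ∀ i, Measurable fun z => g z i)
    (hpcont : ∀ x, ContinuousOn (fun y => p (x, y)) (Icc 0 x))
    (hgcont : ∀ i x, ContinuousOn (fun y => g (x, y) i) (Icc 0 x))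
    (hpint : ∀ η, IsTreaty n μ η → Integrable p η)
    (hgint : ∀ η, IsTreaty n μ η → ∀ i, Integrable (fun z => g z i) η)
    (r : ℝ) (l : ι → ℝ)
    (hineq : ∀ η, IsTreaty n μ η →
      0 ≤ r * (∫ z, p z ∂η - ∫ z, p z ∂ηs)
        + ∑ i, l i * (∫ z, g z i ∂η - ∫ z, g z i ∂ηs)) :
    ηs {q : Pt n | q ∈ treatySet n ∧ ∀ s ∈ Icc (0 : Vec n) q.1,
      r * p q + ∑ i, l i * g q i ≤ r * p (q.1, s) + ∑ i, l i * g (q.1, s) i} = 1 := by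
  have hmin : ∀ η, IsTreaty n μ η →
      ∫ z, lagrangianKernel r l p g z ∂ηs ≤ ∫ z, lagrangianKernel r l p g z ∂η := by
    intro η hη
    have hη_ineq := hineq η hη
    rw [integral_lagrangianKernel r l (hpint ηs hηs) (hgint ηs hηs),
      integral_lagrangianKernel r l (hpint η hη) (hgint η hη)]
    simp only [mul_sub, Finset.sum_sub_distrib] at hη_ineq
    linarith
  have hargmin := hηs.ae_isMinOn_of_integral_le (measurable_lagrangianKernel r l hpmeas hgmeas)
    (fun x => continuousOn_lagrangianKernel r l (hpcont x) fun i => hgcont i x)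
    (fun η hη => integrable_lagrangianKernel r l (hpint η hη) (hgint η hη)) hmin
  have := hηs.1
  refine (measure_congr (eventuallyEq_univ.2 ?_)).trans measure_univ
  filter_upwards [hηs.ae_mem_treatySet, hargmin] with q hq hqmin using ⟨hq, hqmin⟩

/-- when the directional derivatives of `𝒫` and `𝒢` at the optimal
treaty `η*` are integral operators (with continuous kernels `p` and `g`) in
every direction of `𝓜 − η*`, and the partial minimization function
`m(x) = inf_{y ∈ [0,x]} ( r*·p(x,y) + λ*·g(x,y) )` is measurable, then `η*` is
concentrated on the set of pointwise minimizers of the Lagrangian kernel. -/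
theorem stmt6 (n m : ℕ) (μ : Measure (Vec n)) [IsProbabilityMeasure μ]
    (hac : μ ≪ volume)
    (P : Measure (Pt n) → ℝ) (G : Measure (Pt n) → Fin m → ℝ)
    (ηs : Measure (Pt n)) (hηs : IsTreaty n μ ηs) (hGs : ∀ i, G ηs i ≤ 0)
    (hopt : ∀ η, IsTreaty n μ η → (∀ i, G η i ≤ 0) → P ηs ≤ P η)
    (p : Pt n → ℝ) (g : Pt n → Fin m → ℝ)
    (hpcont : Continuous p) (hgcont : ∀ i, Continuous fun z => g z i)
    (hpint : ∀ η, IsTreaty n μ η → Integrable p η)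
    (hgint : ∀ η, IsTreaty n μ η → ∀ i, Integrable (fun z => g z i) η)
    (hdP : ∀ η, IsTreaty n μ η →
      HasDirDeriv P ηs η (∫ z, p z ∂η - ∫ z, p z ∂ηs))
    (hdG : ∀ η, IsTreaty n μ η → ∀ i, HasDirDeriv (fun ξ => G ξ i) ηs η
        (∫ z, g z i ∂η - ∫ z, g z i ∂ηs))
    (r : ℝ) (l : Fin m → ℝ) (hr : 0 ≤ r) (hl : ∀ i, 0 ≤ l i)
    (hcompl : ∑ i, l i * G ηs i = 0)
    (hineq : ∀ η, IsTreaty n μ η →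
      0 ≤ r * (∫ z, p z ∂η - ∫ z, p z ∂ηs)
        + ∑ i, l i * (∫ z, g z i ∂η - ∫ z, g z i ∂ηs))
    (hm : Measurable fun x : Vec n =>
      sInf ((fun s => r * p (x, s) + ∑ i, l i * g (x, s) i) '' Icc 0 x)) :
    ηs {q : Pt n | q ∈ treatySet n ∧ ∀ s ∈ Icc (0 : Vec n) q.1,
      r * p q + ∑ i, l i * g q i ≤ r * p (q.1, s) + ∑ i, l i * g (q.1, s) i} = 1 :=
  stmt6_general hηs hpcont.measurable (fun i => (hgcont i).measurable) (fun _ => by fun_prop)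
    (fun i _ => ((hgcont i).comp (by fun_prop)).continuousOn) hpint hgint r l hineq
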